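/- Fix α ∈ (1/2 − 1/100, 1/2) and κ_0 > 0. There is a constant c > 0 such that for all sufficiently large m: if U, V ∈ {0,1}^m are independent uniformly random strings, then the probability that the test declares a match between U and V is at most exp(−c·m^α). -/

import Mathlib

open scoped BigOperators

/-- Weight of a single uniformly random `n`-bit string. -/
noncomputable def unif (n : ℕ) : ℝ := (1 / 2 : ℝ) ^ n

/-- Probability of an event `E` in a finite outcome space with weight `w`. -/
noncomputable def prob {Ω : Type*} [Fintype Ω] (w : Ω → ℝ) (E : Set Ω) : ℝ :=
  ∑ ω, E.indicator w ω

/-- Majority bit: `true` iff strictly more `1`s (`true`s) than `0`s. -/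
def Maj (W : List Bool) : Bool := decide (W.count false < W.count true)

/-- `seg U a m` : the block `U[a, a+m)` of the string `U`. -/
def seg (U : List Bool) (a m : ℕ) : List Bool := (U.drop a).take m

/-- The majority-block matching test with parameters `α, κ` on two blocks of length `m`:
divide into `⌊m^α⌋` consecutive blocks of length `⌊m^(1-α)⌋` and declare a match if more
than a `(1/2 + κ)`-fraction of the blocks have equal majority bits. -/
def matchTest (α κ : ℝ) (m : ℕ) (U V : List Bool) : Prop :=
  ((1 / 2 + κ) * (⌊(m : ℝ) ^ α⌋₊ : ℝ) : ℝ) <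
    (((Finset.range ⌊(m : ℝ) ^ α⌋₊).filter fun j =>
      Maj (seg U (j * ⌊(m : ℝ) ^ (1 - α)⌋₊) ⌊(m : ℝ) ^ (1 - α)⌋₊) =
      Maj (seg V (j * ⌊(m : ℝ) ^ (1 - α)⌋₊) ⌊(m : ℝ) ^ (1 - α)⌋₊)).card : ℝ)

theorem seg_append_zero {L m : ℕ} (u : Fin L → Bool) (U : Fin m → Bool) :
    seg (List.ofFn (Fin.append u U)) (0 * L) L = List.ofFn u := by
  rw [List.ofFn_fin_append]
  simp [seg]

theorem seg_append_succ {L m : ℕ} (u : Fin L → Bool) (U : Fin m → Bool) (j : ℕ) :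
    seg (List.ofFn (Fin.append u U)) ((j + 1) * L) L = seg (List.ofFn U) (j * L) L := by
  rw [List.ofFn_fin_append]
  unfold seg
  rw [List.drop_append]
  have h1 : (j + 1) * L - (List.ofFn u).length = j * L := by
    rw [List.length_ofFn, Nat.succ_mul]; omega
  have h2 : List.drop ((j + 1) * L) (List.ofFn u) = [] := by
    apply List.drop_eq_nil_of_le
    rw [List.length_ofFn, Nat.succ_mul]; omega
  rw [h1, h2, List.nil_append]

theorem sum_blocks (L : ℕ) (f : Bool → Bool → ℝ) (k r : ℕ) : ∀ m : ℕ, m = k * L + r →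
    ∑ U : Fin m → Bool, ∑ V : Fin m → Bool, ∏ j ∈ Finset.range k,
      f (Maj (seg (List.ofFn U) (j * L) L)) (Maj (seg (List.ofFn V) (j * L) L))
    = (∑ u : Fin L → Bool, ∑ v : Fin L → Bool, f (Maj (List.ofFn u)) (Maj (List.ofFn v))) ^ k
      * 4 ^ r := by
  induction k with
  | zero =>
    intro m hm
    have : m = r := by simpa using hm
    subst this
    simp [← mul_pow]
    norm_num
  | succ k ih =>
    intro m hm
    obtain ⟨m', rfl⟩ : ∃ m', m = L + m' := ⟨k * L + r, by rw [hm, Nat.succ_mul]; ring⟩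
    have hm' : m' = k * L + r := by rw [Nat.succ_mul] at hm; omega
    have ih' := ih m' hm'
    rw [pow_succ', mul_assoc, ← ih']
    rw [← (Fin.appendEquiv L m').sum_comp]
    simp_rw [← (Fin.appendEquiv L m' (α := Bool)).sum_comp]
    simp only [Fin.appendEquiv, Equiv.coe_fn_mk, Fintype.sum_prod_type, Finset.prod_range_succ',
      seg_append_zero, seg_append_succ]
    rw [Finset.sum_mul_sum]
    refine Finset.sum_congr rfl fun u _ => ?_
    refine Finset.sum_congr rfl fun U _ => ?_
    rw [Finset.sum_mul_sum]
    refine Finset.sum_congr rfl fun u _ => ?_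
    refine Finset.sum_congr rfl fun U _ => ?_
    ring

def sg (b : Bool) : ℝ := if b then 1 else -1

theorem count_ofFn (L : ℕ) (u : Fin L → Bool) (b : Bool) :
    (List.ofFn u).count b = (Finset.univ.filter fun i => u i = b).card := by
  induction L with
  | zero => simp
  | succ n ih =>
    rw [List.ofFn_succ, List.count_cons, ih, Fin.card_filter_univ_succ]
    by_cases h : u 0 = b <;> simp [h]

theorem count_add (L : ℕ) (u : Fin L → Bool) :
    (List.ofFn u).count true + (List.ofFn u).count false = L := by
  have := List.count_true_add_count_false (l := List.ofFn u)
  simpa using this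

theorem count_not (L : ℕ) (u : Fin L → Bool) (b : Bool) :
    (List.ofFn (fun i => !(u i))).count b = (List.ofFn u).count (!b) := by
  rw [count_ofFn, count_ofFn]
  congr 1
  ext i
  cases b <;> cases h : u i <;> simp [h]

theorem ties_card (L : ℕ) :
    (Finset.univ.filter fun u : Fin L → Bool =>
      (List.ofFn u).count true = (List.ofFn u).count false).card ≤
      if Even L then Nat.centralBinom (L / 2) else 0 := by
  split_ifs with h
  · obtain ⟨n, rfl⟩ := h
    have e : (n + n) / 2 = n := by omega
    have : Nat.centralBinom n = (Finset.powersetCard n (Finset.univ : Finset (Fin (n + n)))).card := by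
      rw [Finset.card_powersetCard, Finset.card_univ, Fintype.card_fin, Nat.centralBinom, two_mul]
    rw [e, this]
    apply Finset.card_le_card_of_injOn (fun u => Finset.univ.filter fun i => u i = true)
    · intro u hu
      simp only [Finset.coe_filter, Finset.mem_univ, true_and, Set.mem_setOf_eq] at hu
      have h2 := count_add _ u
      simp only [Finset.mem_coe, Finset.mem_powersetCard, Finset.subset_univ, true_and]
      rw [← count_ofFn]
      omega
    · intro u _ v _ huv
      ext i
      have := congrArg (fun s => i ∈ s) huv
      simp only [Finset.mem_filter, Finset.mem_univ, true_and, eq_iff_iff] at this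
      exact Bool.eq_iff_iff.mpr this
  · simp only [nonpos_iff_eq_zero, Finset.card_eq_zero, Finset.filter_eq_empty_iff]
    intro u _ hu
    have h2 := count_add _ u
    exact h ⟨_, by rw [← hu] at h2; exact h2.symm⟩

theorem sum_sg (L : ℕ) : ∑ u : Fin L → Bool, sg (Maj (List.ofFn u)) =
    - ((Finset.univ.filter fun u : Fin L → Bool =>
      (List.ofFn u).count true = (List.ofFn u).count false).card : ℝ) := by
  have h1 : ∑ u : Fin L → Bool, sg (Maj (List.ofFn u)) =
      ∑ u : Fin L → Bool, sg (Maj (List.ofFn (fun i => !(u i)))) := by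
    symm
    apply Equiv.sum_comp (Equiv.arrowCongr (Equiv.refl (Fin L)) Equiv.boolNot)
      (fun u : Fin L → Bool => sg (Maj (List.ofFn u)))
  have h2 : ∑ u : Fin L → Bool, sg (Maj (List.ofFn u)) +
      ∑ u : Fin L → Bool, sg (Maj (List.ofFn (fun i => !(u i)))) =
      ∑ u : Fin L → Bool, (-2) * (if (List.ofFn u).count true = (List.ofFn u).count false
        then (1 : ℝ) else 0) := by
    rw [← Finset.sum_add_distrib]
    refine Finset.sum_congr rfl fun u _ => ?_
    unfold sg Maj
    rw [count_not, count_not]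
    simp only [Bool.not_true, Bool.not_false, decide_eq_true_eq]
    rcases lt_trichotomy ((List.ofFn u).count true) ((List.ofFn u).count false) with h | h | h
    · simp [h, h.ne, not_lt.mpr h.le]
    · simp [h]; norm_num
    · simp [h, h.ne', not_lt.mpr h.le]
  rw [← Finset.mul_sum, Finset.sum_boole] at h2
  linarith

theorem centralBinom_bound (n : ℕ) :
    ((Nat.centralBinom n : ℝ)) ^ 2 * (2 * n + 1) ≤ (4 ^ n) ^ 2 := by
  induction n with
  | zero => simp
  | succ n ih =>
    have h := congrArg (Nat.cast : ℕ → ℝ) (Nat.succ_mul_centralBinom_succ n)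
    push_cast at h ⊢
    have hn : (0 : ℝ) < n + 1 := by positivity
    have h1 : (Nat.centralBinom (n + 1) : ℝ) = 2 * (2 * n + 1) * Nat.centralBinom n / (n + 1) := by
      field_simp
      linarith
    rw [h1, div_pow, div_mul_eq_mul_div, div_le_iff₀ (by positivity), pow_succ (4 : ℝ) n]
    have h3 : (2 * (n : ℝ) + 1) * (2 * (n + 1) + 1) ≤ 4 * (n + 1) ^ 2 := by nlinarith
    calc (2 * (2 * (n : ℝ) + 1) * (Nat.centralBinom n : ℝ)) ^ 2 * (2 * ((n : ℝ) + 1) + 1)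
        = 4 * ((Nat.centralBinom n : ℝ) ^ 2 * (2 * n + 1)) *
            ((2 * (n : ℝ) + 1) * (2 * ((n : ℝ) + 1) + 1)) := by ring
      _ ≤ 4 * ((4 ^ n) ^ 2) * (4 * ((n : ℝ) + 1) ^ 2) := by gcongr
      _ = _ := by ring

theorem sum_sg_sq (L : ℕ) :
    (∑ u : Fin L → Bool, sg (Maj (List.ofFn u))) ^ 2 * L ≤ 4 ^ L := by
  rw [sum_sg]
  have h := ties_card L
  set T := (Finset.univ.filter fun u : Fin L → Bool =>
      (List.ofFn u).count true = (List.ofFn u).count false).card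
  split_ifs at h with he
  · obtain ⟨n, rfl⟩ := he
    have e : (n + n) / 2 = n := by omega
    rw [e] at h
    have h' : (T : ℝ) ≤ Nat.centralBinom n := by exact_mod_cast h
    have := centralBinom_bound n
    push_cast
    calc (-(T : ℝ)) ^ 2 * (n + n) = (T : ℝ) ^ 2 * (n + n) := by ring
      _ ≤ (Nat.centralBinom n : ℝ) ^ 2 * (2 * n + 1) := by
        apply mul_le_mul _ (by linarith) (by positivity) (by positivity)
        gcongr
      _ ≤ _ := this
      _ = _ := by ring
  · have : T = 0 := by omega
    simp [this]

/-- the weight of one block -/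
noncomputable def wt (κ : ℝ) (a b : Bool) : ℝ :=
  Real.exp (κ * ((if a = b then 1 else 0) - (1 / 2 + κ)))

theorem wt_eq (κ : ℝ) (a b : Bool) : wt κ a b =
    Real.exp (-κ ^ 2) * (Real.cosh (κ / 2) + Real.sinh (κ / 2) * (sg a * sg b)) := by
  have h1 : Real.exp (κ * (1 - (1 / 2 + κ))) = Real.exp (-κ ^ 2) * Real.exp (κ / 2) := by
    rw [← Real.exp_add]; congr 1; ring
  have h2 : Real.exp (κ * (0 - (1 / 2 + κ))) = Real.exp (-κ ^ 2) * Real.exp (-(κ / 2)) := by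
    rw [← Real.exp_add]; congr 1; ring
  unfold wt
  cases a <;> cases b <;> simp only [sg, Real.cosh_eq, Real.sinh_eq, if_true, reduceCtorEq, if_false,
    Bool.false_eq_true, h1, h2] <;> ring

theorem block_bound (κ : ℝ) (hκ : 0 < κ) (L : ℕ) (hL0 : 0 < L)
    (hL : Real.exp (κ / 2) / L ≤ Real.exp (κ ^ 2 / 2) - Real.exp (κ ^ 2 / 8)) :
    ∑ u : Fin L → Bool, ∑ v : Fin L → Bool, wt κ (Maj (List.ofFn u)) (Maj (List.ofFn v))
      ≤ 4 ^ L * Real.exp (-κ ^ 2 / 2) := by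
  have hs := sum_sg_sq L
  have key : ∑ u : Fin L → Bool, ∑ v : Fin L → Bool, wt κ (Maj (List.ofFn u)) (Maj (List.ofFn v))
      = Real.exp (-κ ^ 2) * (4 ^ L * Real.cosh (κ / 2) + Real.sinh (κ / 2) *
        (∑ u : Fin L → Bool, sg (Maj (List.ofFn u))) ^ 2) := by
    simp_rw [wt_eq, ← Finset.mul_sum, Finset.sum_add_distrib, ← Finset.mul_sum]
    rw [← Finset.sum_mul, ← sq]
    congr 2
    simp [← mul_assoc, ← mul_pow]
    norm_num
  rw [key]
  set t := (∑ u : Fin L → Bool, sg (Maj (List.ofFn u))) ^ 2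
  have hLp : (0 : ℝ) < L := by exact_mod_cast hL0
  have ht0 : 0 ≤ t := sq_nonneg _
  have ht : t ≤ 4 ^ L / L := by rwa [le_div_iff₀ hLp]
  have hc : Real.cosh (κ / 2) ≤ Real.exp (κ ^ 2 / 8) := by
    refine (Real.cosh_le_exp_half_sq _).trans (le_of_eq ?_)
    congr 1; ring
  have hsh : Real.sinh (κ / 2) ≤ Real.exp (κ / 2) := by
    rw [Real.sinh_eq]
    have := Real.exp_pos (κ / 2)
    have := Real.exp_pos (-(κ / 2))
    linarith
  calc _ ≤ Real.exp (-κ ^ 2) * (4 ^ L * Real.exp (κ ^ 2 / 8) + Real.exp (κ / 2) * (4 ^ L / L)) := by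
        gcongr
    _ = Real.exp (-κ ^ 2) * 4 ^ L * (Real.exp (κ ^ 2 / 8) + Real.exp (κ / 2) / L) := by ring
    _ ≤ Real.exp (-κ ^ 2) * 4 ^ L * Real.exp (κ ^ 2 / 2) := by
        gcongr
        linarith
    _ = 4 ^ L * (Real.exp (-κ ^ 2) * Real.exp (κ ^ 2 / 2)) := by ring
    _ = _ := by
        rw [← Real.exp_add]; congr 2; ring

theorem indicator_bound (κ : ℝ) (hκ : 0 < κ) (k : ℕ) (a b : ℕ → Bool)
    (h : (1 / 2 + κ) * (k : ℝ) < (((Finset.range k).filter fun j => a j = b j).card : ℝ)) :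
    1 ≤ ∏ j ∈ Finset.range k, wt κ (a j) (b j) := by
  unfold wt
  rw [← Real.exp_sum, ← Finset.mul_sum, Finset.sum_sub_distrib, Finset.sum_boole]
  simp only [Finset.sum_const, Finset.card_range, nsmul_eq_mul]
  apply Real.one_le_exp
  apply mul_nonneg hκ.le
  linarith

theorem prob_bound (κ : ℝ) (hκ : 0 < κ) (α : ℝ) (m : ℕ)
    (hk : ⌊(m : ℝ) ^ α⌋₊ * ⌊(m : ℝ) ^ (1 - α)⌋₊ ≤ m)
    (hL0 : 0 < ⌊(m : ℝ) ^ (1 - α)⌋₊)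
    (hL : Real.exp (κ / 2) / ⌊(m : ℝ) ^ (1 - α)⌋₊ ≤
      Real.exp (κ ^ 2 / 2) - Real.exp (κ ^ 2 / 8)) :
    prob (fun _ : (Fin m → Bool) × (Fin m → Bool) => unif m * unif m)
        {ω | matchTest α κ m (List.ofFn ω.1) (List.ofFn ω.2)}
      ≤ Real.exp (-κ ^ 2 / 2) ^ ⌊(m : ℝ) ^ α⌋₊ := by
  unfold prob matchTest
  set k := ⌊(m : ℝ) ^ α⌋₊
  set L := ⌊(m : ℝ) ^ (1 - α)⌋₊
  obtain ⟨r, hr⟩ := Nat.exists_eq_add_of_le hk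
  have hu : unif m * unif m = (1 / 4) ^ m := by
    unfold unif; rw [← mul_pow]; norm_num
  have hB := block_bound κ hκ L hL0 hL
  have hS := sum_blocks L (wt κ) k r m hr
  calc _ ≤ ∑ ω : (Fin m → Bool) × (Fin m → Bool), (1 / 4 : ℝ) ^ m * ∏ j ∈ Finset.range k,
        wt κ (Maj (seg (List.ofFn ω.1) (j * L) L)) (Maj (seg (List.ofFn ω.2) (j * L) L)) := by
        apply Finset.sum_le_sum
        intro ω _
        by_cases h : ω ∈ {ω : (Fin m → Bool) × (Fin m → Bool) | (1 / 2 + κ) * (k : ℝ) <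
          (((Finset.range k).filter fun j => Maj (seg (List.ofFn ω.1) (j * L) L) =
            Maj (seg (List.ofFn ω.2) (j * L) L)).card : ℝ)}
        · rw [Set.indicator_of_mem h, hu]
          apply le_mul_of_one_le_right (by positivity)
          exact indicator_bound κ hκ k (fun j => Maj (seg (List.ofFn ω.1) (j * L) L))
            (fun j => Maj (seg (List.ofFn ω.2) (j * L) L)) h
        · rw [Set.indicator_of_notMem h]
          apply mul_nonneg (by positivity)
          exact Finset.prod_nonneg fun j _ => (Real.exp_pos _).le
    _ = (1 / 4 : ℝ) ^ m * ((∑ u : Fin L → Bool, ∑ v : Fin L → Bool,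
          wt κ (Maj (List.ofFn u)) (Maj (List.ofFn v))) ^ k * 4 ^ r) := by
        rw [← Finset.mul_sum, Fintype.sum_prod_type, hS]
    _ ≤ (1 / 4 : ℝ) ^ m * ((4 ^ L * Real.exp (-κ ^ 2 / 2)) ^ k * 4 ^ r) := by
        gcongr
        exact Finset.sum_nonneg fun u _ => Finset.sum_nonneg fun v _ => (Real.exp_pos _).le
    _ = ((1 / 4 : ℝ) ^ m * (4 ^ (k * L + r))) * Real.exp (-κ ^ 2 / 2) ^ k := by
        rw [mul_pow, ← pow_mul, pow_add, mul_comm L k]; ring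
    _ = _ := by
        rw [← hr, ← mul_pow]; norm_num

/-- **Independent strings rarely match.**  Fix `α ∈ (1/2 - 1/100, 1/2)` and `κ₀ > 0`.
There is `c > 0` such that for all sufficiently large `m`: if `U, V ∈ {0,1}^m` are
independent uniformly random strings, then the probability that the test declares a
match between `U` and `V` is at most `exp(-c·m^α)`. -/
theorem independent_strings_rarely_match
    (α κ0 : ℝ) (hα : α ∈ Set.Ioo (1 / 2 - 1 / 100 : ℝ) (1 / 2)) (hκ0 : 0 < κ0) :
    ∃ c > (0 : ℝ), ∃ m0 : ℕ, ∀ m : ℕ, m0 ≤ m →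
      prob (fun _ : (Fin m → Bool) × (Fin m → Bool) => unif m * unif m)
        {ω | matchTest α κ0 m (List.ofFn ω.1) (List.ofFn ω.2)}
      ≤ Real.exp (-c * (m : ℝ) ^ α) := by
  obtain ⟨ha1, ha2⟩ := hα
  refine ⟨κ0 ^ 2 / 4, by positivity, ?_⟩
  have hm : Filter.Tendsto (fun m : ℕ => ⌊(m : ℝ) ^ (1 - α)⌋₊) Filter.atTop Filter.atTop :=
    (tendsto_nat_floor_atTop (α := ℝ)).comp
      ((tendsto_rpow_atTop (by linarith : 0 < 1 - α)).comp tendsto_natCast_atTop_atTop)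
  have hlim : Filter.Tendsto (fun m : ℕ => Real.exp (κ0 / 2) / (⌊(m : ℝ) ^ (1 - α)⌋₊ : ℝ))
      Filter.atTop (nhds 0) :=
    Filter.Tendsto.const_div_atTop (tendsto_natCast_atTop_atTop.comp hm) _
  have hpos : 0 < Real.exp (κ0 ^ 2 / 2) - Real.exp (κ0 ^ 2 / 8) := by
    have : Real.exp (κ0 ^ 2 / 8) < Real.exp (κ0 ^ 2 / 2) := by
      apply Real.exp_lt_exp.mpr
      have : 0 < κ0 ^ 2 := by positivity
      linarith
    linarith
  have ev := ((hlim.eventually_le_const hpos).and (hm.eventually_gt_atTop 0)).and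
    (Filter.eventually_ge_atTop 1)
  obtain ⟨m0, h0⟩ := Filter.eventually_atTop.mp ev
  refine ⟨m0, fun m hmm => ?_⟩
  obtain ⟨⟨hA, hB⟩, hC⟩ := h0 m hmm
  have hmR : (1 : ℝ) ≤ m := by exact_mod_cast hC
  have hk : ⌊(m : ℝ) ^ α⌋₊ * ⌊(m : ℝ) ^ (1 - α)⌋₊ ≤ m := by
    have : ((⌊(m : ℝ) ^ α⌋₊ * ⌊(m : ℝ) ^ (1 - α)⌋₊ : ℕ) : ℝ) ≤ (m : ℝ) := by
      push_cast
      calc _ ≤ (m : ℝ) ^ α * (m : ℝ) ^ (1 - α) := by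
            gcongr
            · exact Nat.floor_le (by positivity)
            · exact Nat.floor_le (by positivity)
        _ = m := by
            rw [← Real.rpow_add (by linarith)]; simp
    exact_mod_cast this
  refine (prob_bound κ0 hκ0 α m hk hB hA).trans ?_
  rw [← Real.exp_nat_mul]
  apply Real.exp_le_exp.mpr
  have hx : 1 ≤ (m : ℝ) ^ α := Real.one_le_rpow hmR (by linarith)
  have hf1 : (1 : ℝ) ≤ (⌊(m : ℝ) ^ α⌋₊ : ℝ) := by
    exact_mod_cast (Nat.one_le_floor_iff _).mpr hx
  have hf2 := Nat.lt_floor_add_one ((m : ℝ) ^ α)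
  have h2 : (m : ℝ) ^ α ≤ 2 * (⌊(m : ℝ) ^ α⌋₊ : ℝ) := by linarith
  have h3 : 0 ≤ κ0 ^ 2 / 4 := by positivity
  nlinarith [mul_le_mul_of_nonneg_left h2 h3]
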